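/- (Proposition on extension to centralizer subalgebras, Morita-equivalence form.) Under the hypotheses in the context, the block algebras C := MonoidAlgebra k (N·C_G(N)) ⧸ I(1−b) and C' := MonoidAlgebra k (N'·C_G(N)) ⧸ I(1−b') (where b, b' are regarded in these group algebras via the inclusions N ≤ N·C_G(N) and N' ≤ N'·C_G(N)) are Morita equivalent (IsMoritaEquivalent). This is the ungraded content of the C̄_G(N)-graded Morita equivalence between C = b·k[N·C_G(N)] and C' = b'·k[N'·C_G(N)] induced by C ⊗_B M. -/

import Mathlib

open scoped TensorProduct
open MonoidAlgebra

noncomputable section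

/-- The block algebra: the quotient of `R` by the two-sided ideal generated by `1 - e`. -/
abbrev BlockQuot {R : Type} [Ring R] (e : R) : Type :=
  (TwoSidedIdeal.span {1 - e}).ringCon.Quotient

/-- The canonical projection onto the block algebra. -/
def blockPi {R : Type} [Ring R] (e : R) : R →+* BlockQuot e where
  toFun r := ((r : R) : (TwoSidedIdeal.span {1 - e}).ringCon.Quotient)
  map_one' := RingCon.coe_one _
  map_mul' := RingCon.coe_mul _
  map_zero' := RingCon.coe_zero _
  map_add' := RingCon.coe_add _

instance blockAlgebra {k R : Type} [CommRing k] [Ring R] [Algebra k R] (e : R) :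
    Algebra k (BlockQuot e) :=
  RingHom.toAlgebra' ((blockPi e).comp (algebraMap k R)) (by
    intro c x
    induction x using Quotient.inductionOn' with
    | h r =>
      show ((algebraMap k R c : R) : BlockQuot e) * ↑r = ↑r * ↑(algebraMap k R c)
      rw [← RingCon.coe_mul, ← RingCon.coe_mul, Algebra.commutes])

/-- `M` induces a Morita equivalence between `B` and `B'`: it is a finitely generated
projective generator as a left `B`-module and the right `B'`-action gives a ring
isomorphism of `B'ᵐᵒᵖ` onto `End_B(M)`. -/
def InducesMorita (k : Type) [CommRing k] (B B' : Type) [Ring B] [Ring B']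
    [Algebra k B] [Algebra k B'] (M : Type) [AddCommGroup M]
    [Module (B ⊗[k] B'ᵐᵒᵖ) M] : Prop :=
  letI : Module B M :=
    Module.compHom M (Algebra.TensorProduct.includeLeftRingHom : B →+* B ⊗[k] B'ᵐᵒᵖ)
  Module.Finite B M ∧ Module.Projective B M ∧
    (∃ (n : ℕ) (f : (Fin n → M) →ₗ[B] B), Function.Surjective f) ∧
    ∃ φ : B'ᵐᵒᵖ →+* Module.End B M,
      Function.Bijective φ ∧ ∀ (β' : B'ᵐᵒᵖ) (m : M), φ β' m = ((1 : B) ⊗ₜ[k] β') • m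

/-- Morita equivalence of rings: an equivalence between the module categories. -/
def IsMoritaEquivalentRing (R S : Type) [Ring R] [Ring S] : Prop :=
  Nonempty (ModuleCat.{0} R ≌ ModuleCat.{0} S)

open CategoryTheory

/-- Ring extension generated by `R` and `Γ`, commuting, amalgamated over `Z`. -/
structure CExt {Γ Z : Type} [Group Γ] (zΓ : Z → Γ) (R A : Type) [Ring R] [Ring A] where
  i : R →+* A
  j : Γ →* A
  zR : Z → R
  comm : ∀ r c, i r * j c = j c * i r
  up : ∀ (T : Type) [Ring T] (f : R →+* T) (ρ : Γ →* T),
    (∀ r c, f r * ρ c = ρ c * f r) → (∀ z, f (zR z) = ρ (zΓ z)) →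
    ∃ g : A →+* T, (∀ r, g (i r) = f r) ∧ ∀ c, g (j c) = ρ c
  amal : ∀ z, i (zR z) = j (zΓ z)
  gen : Subring.closure (Set.range i ∪ Set.range j) = ⊤

theorem CExt.linear {Γ Z : Type} [Group Γ] {zΓ : Z → Γ} {R A : Type} [Ring R] [Ring A]
    (E : CExt zΓ R A) {X Y : Type} [AddCommGroup X] [AddCommGroup Y] [Module A X] [Module A Y]
    (φ : X →+ Y) (h1 : ∀ r x, φ (E.i r • x) = E.i r • φ x)
    (h2 : ∀ c x, φ (E.j c • x) = E.j c • φ x) (a : A) (x : X) : φ (a • x) = a • φ x := by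
  have ha : a ∈ Subring.closure (Set.range E.i ∪ Set.range E.j) := by rw [E.gen]; trivial
  induction ha using Subring.closure_induction generalizing x with
  | mem y hy =>
    rcases hy with ⟨r, rfl⟩ | ⟨c, rfl⟩
    · exact h1 r x
    · exact h2 c x
  | zero => simp
  | one => simp
  | add a b _ _ ha hb => simp [add_smul, ha, hb]
  | neg a _ ha => simp [neg_smul, ha]
  | mul a b _ _ ha hb => simp [mul_smul, ha, hb]

/-- A bimodule compatible with `Z`. -/
structure MSetup {Γ Z : Type} [Group Γ] {zΓ : Z → Γ} {R S A A' : Type} [Ring R] [Ring S]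
    [Ring A] [Ring A'] (E : CExt zΓ R A) (E' : CExt zΓ S A') (P : Type) [AddCommGroup P]
    [Module R P] [Module Sᵐᵒᵖ P] : Prop where
  comm : ∀ (r : R) (s : Sᵐᵒᵖ) (p : P), s • r • p = r • s • p
  compat : ∀ z (p : P), E.zR z • p = MulOpposite.op (E'.zR z) • p

section

variable {Γ Z : Type} [Group Γ] {zΓ : Z → Γ} {R S A A' : Type} [Ring R] [Ring S]
    [Ring A] [Ring A'] {E : CExt zΓ R A} {E' : CExt zΓ S A'} {P : Type} [AddCommGroup P]
    [Module R P] [Module Sᵐᵒᵖ P] (D : MSetup E E' P)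

/-- The group of `R`-linear maps from `P` to `X`. -/
def MSetup.HomSub (_ : MSetup E E' P) (X : Type) [AddCommGroup X] [Module A X] :
    AddSubgroup (P →+ X) where
  carrier := {f | ∀ (r : R) p, f (r • p) = E.i r • f p}
  add_mem' := by
    intro f g hf hg r p
    simp [hf r p, hg r p]
  zero_mem' := by intro r p; simp
  neg_mem' := by
    intro f hf r p
    simp [hf r p]

/-- The group of `R`-linear maps from `P` to `X`. -/
def MSetup.HomObj (D : MSetup E E' P) (X : Type) [AddCommGroup X] [Module A X] : Type :=
  D.HomSub X

instance (X : Type) [AddCommGroup X] [Module A X] : AddCommGroup (D.HomObj X) :=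
  inferInstanceAs (AddCommGroup (D.HomSub X))

instance (X : Type) [AddCommGroup X] [Module A X] : CoeFun (D.HomObj X) (fun _ => P → X) :=
  ⟨fun f => f.1⟩

variable {X : Type} [AddCommGroup X] [Module A X]

/-- Constructor. -/
def MSetup.mk' (f : P →+ X) (hf : ∀ (r : R) p, f (r • p) = E.i r • f p) : D.HomObj X := ⟨f, hf⟩

@[simp] theorem MSetup.mk'_apply (f : P →+ X) (hf) (p : P) : D.mk' f hf p = f p := rfl

@[ext] theorem MSetup.hom_ext {f g : D.HomObj X} (h : ∀ p, f p = g p) : f = g :=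
  Subtype.ext (AddMonoidHom.ext h)

@[simp] theorem MSetup.hom_add (f g : D.HomObj X) (p : P) : (f + g) p = f p + g p := rfl
@[simp] theorem MSetup.hom_zero (p : P) : (0 : D.HomObj X) p = 0 := rfl
@[simp] theorem MSetup.map_add (f : D.HomObj X) (p q : P) : f (p + q) = f p + f q :=
  f.1.map_add p q
@[simp] theorem MSetup.map_zero (f : D.HomObj X) : f 0 = 0 := f.1.map_zero
theorem MSetup.map_smul (f : D.HomObj X) (r : R) (p : P) : f (r • p) = E.i r • f p := f.2 r p
theorem MSetup.map_sum (f : D.HomObj X) {ι : Type} (s : Finset ι) (g : ι → P) :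
    f (∑ t ∈ s, g t) = ∑ t ∈ s, f (g t) := _root_.map_sum f.1 g s

/-- Evaluation. -/
def MSetup.ev (p : P) : D.HomObj X →+ X where
  toFun f := f p
  map_zero' := rfl
  map_add' _ _ := rfl

theorem MSetup.hom_sum {ι : Type} (s : Finset ι) (g : ι → D.HomObj X) (p : P) :
    (∑ t ∈ s, g t) p = ∑ t ∈ s, g t p := _root_.map_sum (D.ev p) g s

/-- `S` acts. -/
def MSetup.actS : S →+* AddMonoid.End (D.HomObj X) where
  toFun s :=
    { toFun := fun f => D.mk' (f.1.comp (DistribSMul.toAddMonoidHom P (MulOpposite.op s))) (by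
        intro r p
        show f (MulOpposite.op s • r • p) = E.i r • f (MulOpposite.op s • p)
        rw [D.comm, D.map_smul])
      map_zero' := rfl
      map_add' := fun _ _ => rfl }
  map_one' := by
    ext f p
    show f (MulOpposite.op (1 : S) • p) = f p
    simp
  map_mul' s t := by
    ext f p
    show f (MulOpposite.op (s * t) • p) = f (MulOpposite.op t • MulOpposite.op s • p)
    rw [MulOpposite.op_mul, mul_smul]
  map_zero' := by
    ext f p
    show f (MulOpposite.op (0 : S) • p) = 0
    simp
  map_add' s t := by
    ext f p
    show f (MulOpposite.op (s + t) • p) = f (MulOpposite.op s • p) + f (MulOpposite.op t • p)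
    rw [MulOpposite.op_add, add_smul, D.map_add]

/-- `Γ` acts. -/
def MSetup.actΓ : Γ →* AddMonoid.End (D.HomObj X) where
  toFun c :=
    { toFun := fun f => D.mk' ((DistribSMul.toAddMonoidHom X (E.j c)).comp f.1) (by
        intro r p
        show E.j c • f (r • p) = E.i r • E.j c • f p
        rw [D.map_smul, ← mul_smul, ← mul_smul, E.comm])
      map_zero' := by
        ext p
        show E.j c • (0 : X) = 0
        simp
      map_add' := fun f g => by
        ext p
        show E.j c • (f p + g p) = E.j c • f p + E.j c • g p
        simp }
  map_one' := by
    ext f p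
    show E.j 1 • f p = f p
    simp
  map_mul' s t := by
    ext f p
    show E.j (s * t) • f p = E.j s • E.j t • f p
    rw [_root_.map_mul, mul_smul]

theorem MSetup.exists_act (D : MSetup E E' P) (X : Type) [AddCommGroup X] [Module A X] :
    ∃ g : A' →+* AddMonoid.End (D.HomObj X),
    (∀ r, g (E'.i r) = D.actS r) ∧ ∀ c, g (E'.j c) = D.actΓ c := by
  apply E'.up
  · intro r c
    rfl
  · intro z
    ext f p
    show f (MulOpposite.op (E'.zR z) • p) = E.j (zΓ z) • f p
    rw [← D.compat, D.map_smul, E.amal]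

instance (D : MSetup E E' P) (X : Type) [AddCommGroup X] [Module A X] :
    Module A' (D.HomObj X) :=
  Module.compHom _ (D.exists_act X).choose

theorem MSetup.i_smul (s : S) (f : D.HomObj X) (p : P) :
    (E'.i s • f) p = f (MulOpposite.op s • p) := by
  show (D.exists_act X).choose (E'.i s) f p = _
  rw [(D.exists_act X).choose_spec.1]
  rfl

theorem MSetup.j_smul (c : Γ) (f : D.HomObj X) (p : P) :
    (E'.j c • f) p = E.j c • f p := by
  show (D.exists_act X).choose (E'.j c) f p = _
  rw [(D.exists_act X).choose_spec.2]
  rfl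

/-- Postcomposition. -/
def MSetup.post {Y : Type} [AddCommGroup Y] [Module A Y] (u : X →ₗ[A] Y) :
    D.HomObj X →ₗ[A'] D.HomObj Y :=
  let φ : D.HomObj X →+ D.HomObj Y :=
    { toFun := fun f => D.mk' (u.toAddMonoidHom.comp f.1) (by
        intro r p
        show u (f (r • p)) = E.i r • u (f p)
        rw [D.map_smul, LinearMap.map_smul])
      map_zero' := by
        ext p
        show u 0 = 0
        simp
      map_add' := fun f g => by
        ext p
        show u (f p + g p) = u (f p) + u (g p)
        simp }
  { φ with
    map_smul' := by
      apply E'.linear φ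
      · intro s f
        ext p
        rw [D.i_smul]
        show u ((E'.i s • f) p) = u (f (MulOpposite.op s • p))
        rw [D.i_smul]
      · intro c f
        ext p
        rw [D.j_smul]
        show u ((E'.j c • f) p) = E.j c • u (f p)
        rw [D.j_smul, LinearMap.map_smul] }

@[simp] theorem MSetup.post_apply {Y : Type} [AddCommGroup Y] [Module A Y] (u : X →ₗ[A] Y)
    (f : D.HomObj X) (p : P) : D.post u f p = u (f p) := rfl

/-- The Hom functor. -/
def MSetup.functor : ModuleCat.{0} A ⥤ ModuleCat.{0} A' where
  obj X := ModuleCat.of A' (D.HomObj X)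
  map u := ModuleCat.ofHom (D.post u.hom)
  map_id X := by
    ext f
    rfl
  map_comp u v := by
    ext f
    rfl

variable {Q : Type} [AddCommGroup Q] [Module S Q] [Module Rᵐᵒᵖ Q]

variable (R S P Q) in
/-- Surjective Morita context pairings. -/
structure MPair where
  α : P →+ Q →+ R
  β : Q →+ P →+ S
  α_l : ∀ (r : R) p q, α (r • p) q = r * α p q
  α_r : ∀ (r : R) p q, α p (MulOpposite.op r • q) = α p q * r
  α_m : ∀ (s : S) p q, α (MulOpposite.op s • p) q = α p (s • q)
  β_l : ∀ (s : S) q p, β (s • q) p = s * β q p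
  β_r : ∀ (s : S) q p, β q (MulOpposite.op s • p) = β q p * s
  β_m : ∀ (r : R) q p, β (MulOpposite.op r • q) p = β q (r • p)
  assoc1 : ∀ p q p', α p q • p' = MulOpposite.op (β q p') • p
  assoc2 : ∀ q p q', β q p • q' = MulOpposite.op (α p q') • q
  α_surj : ∃ (n : ℕ) (x : Fin n → P) (y : Fin n → Q), ∑ t, α (x t) (y t) = 1
  β_surj : ∃ (n : ℕ) (y : Fin n → Q) (x : Fin n → P), ∑ t, β (y t) (x t) = 1

/-- Swap. -/
def MPair.swap (W : MPair R S P Q) : MPair S R Q P :=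
  ⟨W.β, W.α, W.β_l, W.β_r, W.β_m, W.α_l, W.α_r, W.α_m, W.assoc2, W.assoc1, W.β_surj, W.α_surj⟩

variable (D' : MSetup E' E Q) (W : MPair R S P Q)

/-- Inner value of the unit. -/
def unitIn (x : X) (q : Q) : D.HomObj X :=
  D.mk' { toFun := fun p => E.i (W.α p q) • x
          map_zero' := by simp
          map_add' := by intro p p'; simp [add_smul] } (by
    intro r p
    show E.i (W.α (r • p) q) • x = E.i r • E.i (W.α p q) • x
    rw [W.α_l, _root_.map_mul, mul_smul])

@[simp] theorem unitIn_apply (x : X) (q : Q) (p : P) : unitIn D W x q p = E.i (W.α p q) • x := rfl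

/-- Unit value. -/
def unitOut (x : X) : D'.HomObj (D.HomObj X) :=
  D'.mk' { toFun := fun q => unitIn D W x q
           map_zero' := by ext p; simp
           map_add' := by intro q q'; ext p; simp [add_smul] } (by
    intro s q
    ext p
    rw [D.i_smul]
    show E.i (W.α p (s • q)) • x = E.i (W.α (MulOpposite.op s • p) q) • x
    rw [W.α_m])

@[simp] theorem unitOut_apply (x : X) (q : Q) (p : P) :
    unitOut D D' W x q p = E.i (W.α p q) • x := rfl

/-- Unit map as additive map. -/
def unitAdd : X →+ D'.HomObj (D.HomObj X) where
  toFun := unitOut D D' W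
  map_zero' := by ext q p; simp
  map_add' x y := by ext q p; simp

/-- Unit map. -/
def unitLin : X →ₗ[A] D'.HomObj (D.HomObj X) :=
  { unitAdd D D' W with
    map_smul' := by
      apply E.linear (unitAdd D D' W)
      · intro r x
        ext q p
        rw [D'.i_smul]
        show E.i (W.α p q) • E.i r • x = E.i (W.α p (MulOpposite.op r • q)) • x
        rw [W.α_r, _root_.map_mul, mul_smul]
      · intro c x
        ext q p
        rw [D'.j_smul, D.j_smul]
        show E.i (W.α p q) • E.j c • x = E.j c • E.i (W.α p q) • x
        rw [← mul_smul, ← mul_smul, E.comm] }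

@[simp] theorem unitLin_apply (x : X) (q : Q) (p : P) :
    unitLin D D' W x q p = E.i (W.α p q) • x := rfl

theorem unitLin_bij : Function.Bijective (unitLin D D' W (X := X)) := by
  obtain ⟨n, x, y, h⟩ := W.α_surj
  rw [Function.bijective_iff_has_inverse]
  refine ⟨fun φ => ∑ t, φ (y t) (x t), fun v => ?_, fun φ => ?_⟩
  · simp only [unitLin_apply]
    rw [← Finset.sum_smul, ← _root_.map_sum, h, _root_.map_one, one_smul]
  · ext q p
    rw [unitLin_apply, Finset.smul_sum]
    have : ∀ t, E.i (W.α p q) • φ (y t) (x t) =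
        φ (MulOpposite.op (W.α (x t) (y t)) • q) p := by
      intro t
      rw [← D.map_smul, W.assoc1, ← D.i_smul, ← D'.map_smul, W.assoc2]
    simp only [this]
    rw [← D.hom_sum, ← D'.map_sum, ← Finset.sum_smul, ← Finset.op_sum, h]
    simp

/-- Unit isomorphism. -/
def unitNat : 𝟭 (ModuleCat.{0} A) ≅ D.functor ⋙ D'.functor :=
  NatIso.ofComponents
    (fun X => (LinearEquiv.ofBijective (unitLin D D' W (X := X)) (unitLin_bij D D' W)).toModuleIso)
    (by
      intro X Y u
      ext x
      apply D'.hom_ext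
      intro q
      apply D.hom_ext
      intro p
      show E.i (W.α p q) • u.hom x = u.hom (E.i (W.α p q) • x)
      rw [LinearMap.map_smul])

theorem morita_main (D : MSetup E E' P) (D' : MSetup E' E Q) (W : MPair R S P Q) :
    IsMoritaEquivalentRing A A' :=
  ⟨CategoryTheory.Equivalence.mk D.functor D'.functor (unitNat D D' W)
    (unitNat D' D W.swap).symm⟩

end

theorem blockPi_surj {R : Type} [Ring R] (e : R) : Function.Surjective (blockPi e) := by
  intro x
  induction x using Quotient.inductionOn' with
  | h r => exact ⟨r, rfl⟩

theorem blockPi_self {R : Type} [Ring R] (e : R) : blockPi e e = 1 := by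
  rw [← (blockPi e).map_one]
  have h : (1 - e) ∈ TwoSidedIdeal.span {1 - e} := TwoSidedIdeal.subset_span rfl
  symm
  exact (RingCon.eq _).2 ((TwoSidedIdeal.rel_iff _ _ _).2 h)

/-- Lift to the block quotient. -/
def blockLift {R T : Type} [Ring R] [Ring T] (e : R) (f : R →+* T) (h : f e = 1) :
    BlockQuot e →+* T :=
  RingCon.lift _ f (by
    intro x y hxy
    have hxy' := (TwoSidedIdeal.rel_iff _ _ _).1 hxy
    have hle : TwoSidedIdeal.span {1 - e} ≤ TwoSidedIdeal.ker f := by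
      rw [TwoSidedIdeal.span_le]
      rintro _ rfl
      simp [TwoSidedIdeal.mem_ker, h]
    have := hle hxy'
    rw [TwoSidedIdeal.mem_ker, map_sub, sub_eq_zero] at this
    exact this)

theorem blockLift_pi {R T : Type} [Ring R] [Ring T] (e : R) (f : R →+* T) (h : f e = 1) (r : R) :
    blockLift e f h (blockPi e r) = f r := rfl

theorem sup_exists {G : Type} [Group G] (N C : Subgroup G)
    (hNC : ∀ n ∈ N, ∀ c ∈ C, n * c = c * n) (h : ↥(N ⊔ C)) :
    ∃ (n : N) (c : C), (h : G) = n * c := by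
  have hle : N ⊔ C ≤
      { carrier := {g : G | ∃ n ∈ N, ∃ c ∈ C, g = n * c}
        mul_mem' := by
          rintro _ _ ⟨n, hn, c, hc, rfl⟩ ⟨m, hm, d, hd, rfl⟩
          refine ⟨n * m, N.mul_mem hn hm, c * d, C.mul_mem hc hd, ?_⟩
          rw [mul_assoc, ← mul_assoc c, ← hNC m hm c hc]
          simp only [mul_assoc]
        one_mem' := ⟨1, N.one_mem, 1, C.one_mem, by simp⟩
        inv_mem' := by
          rintro _ ⟨n, hn, c, hc, rfl⟩
          refine ⟨n⁻¹, N.inv_mem hn, c⁻¹, C.inv_mem hc, ?_⟩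
          rw [hNC n hn c hc, mul_inv_rev] : Subgroup G } := by
    refine sup_le ?_ ?_
    · intro n hn
      exact ⟨n, hn, 1, C.one_mem, by simp⟩
    · intro c hc
      exact ⟨1, N.one_mem, c, hc, by simp⟩
  obtain ⟨n, hn, c, hc, h'⟩ := hle h.2
  exact ⟨⟨n, hn⟩, ⟨c, hc⟩, h'⟩

theorem sup_lift {G : Type} [Group G] (N C : Subgroup G)
    (hNC : ∀ n ∈ N, ∀ c ∈ C, n * c = c * n) {T : Type} [Ring T] (f : N →* T) (ρ : C →* T)
    (hcomm : ∀ n c, f n * ρ c = ρ c * f n)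
    (hag : ∀ (n : N) (c : C), (n : G) = c → f n = ρ c) :
    ∃ g : ↥(N ⊔ C) →* T, ∀ (h : ↥(N ⊔ C)) (n : N) (c : C), (h : G) = n * c → g h = f n * ρ c := by
  choose a d had using sup_exists N C hNC
  have key : ∀ (h : ↥(N ⊔ C)) (n : N) (c : C), (h : G) = n * c → f (a h) * ρ (d h) = f n * ρ c := by
    intro h n c hh
    have h1 : ((n⁻¹ * a h : N) : G) = ((c * (d h)⁻¹ : C) : G) := by
      have := (had h).symm.trans hh
      push_cast
      rw [eq_mul_inv_iff_mul_eq, mul_assoc, this]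
      simp
    have h2 := hag _ _ h1
    have h3 : f (a h) = f n * f (n⁻¹ * a h) := by rw [← map_mul]; simp
    rw [h3, h2, mul_assoc, ← map_mul]
    simp
  refine ⟨⟨⟨fun h => f (a h) * ρ (d h), ?_⟩, ?_⟩, key⟩
  · rw [key 1 1 1 (by simp)]
    simp
  · intro x y
    show f (a (x * y)) * ρ (d (x * y)) = f (a x) * ρ (d x) * (f (a y) * ρ (d y))
    rw [key (x * y) (a x * a y) (d x * d y)]
    · simp only [map_mul]
      rw [mul_assoc, ← mul_assoc (f (a y)), hcomm]
      simp only [mul_assoc]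
    · push_cast
      rw [had x, had y, mul_assoc, ← mul_assoc (d x : G), ← hNC _ (a y).2 _ (d x).2]
      simp only [mul_assoc]

/-- The group-theoretic extension. -/
def groupExt {k : Type} [CommRing k] {G : Type} [Group G] (N C : Subgroup G)
    (hNC : ∀ n ∈ N, ∀ c ∈ C, n * c = c * n) (b : MonoidAlgebra k N)
    {Z : Type} (zN : Z → N) (zΓ : Z → C) (hz : ∀ z, (zN z : G) = zΓ z)
    (hall : ∀ (n : N) (c : C), (n : G) = c → ∃ z, zN z = n) :
    CExt zΓ (BlockQuot b) (BlockQuot (mapDomainRingHom k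
        (Subgroup.inclusion (le_sup_left : N ≤ N ⊔ C)) b)) where
  i := blockLift b ((blockPi _).comp (mapDomainRingHom k (Subgroup.inclusion le_sup_left)))
    (blockPi_self _)
  j := (blockPi (mapDomainRingHom k
        (Subgroup.inclusion (le_sup_left : N ≤ N ⊔ C)) b)).toMonoidHom.comp
    ((MonoidAlgebra.of k ↥(N ⊔ C)).comp (Subgroup.inclusion le_sup_right))
  zR z := blockPi b (single (zN z) 1)
  comm := by
    intro r c
    obtain ⟨r, rfl⟩ := blockPi_surj b r
    rw [blockLift_pi]
    show blockPi _ _ * blockPi _ _ = blockPi _ _ * blockPi _ _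
    rw [← map_mul, ← map_mul]
    congr 1
    induction r using MonoidAlgebra.induction_linear with
    | zero => simp
    | add x y hx hy => rw [map_add, add_mul, mul_add, hx, hy]
    | single n a =>
      rw [mapDomainRingHom_apply, mapDomain_single, MonoidHom.comp_apply, of_apply,
        single_mul_single, single_mul_single]
      congr 1
      · apply Subtype.ext
        exact hNC _ n.2 _ c.2
      · simp
  up := by
    intro T _ f ρ hcomm hag
    obtain ⟨g, hg⟩ := sup_lift N C hNC
      ((f.comp (blockPi b) : _ →* T).comp (MonoidAlgebra.of k N)) ρ
      (fun n c => hcomm _ c) (by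
        intro n c hnc
        obtain ⟨z, rfl⟩ := hall n c hnc
        have hzc : zΓ z = c := Subtype.ext ((hz z).symm.trans hnc)
        rw [← hzc]
        exact hag z)
    let f0 : k →+* T := (f.comp (blockPi b)).comp (algebraMap k (MonoidAlgebra k N))
    let F : MonoidAlgebra k ↥(N ⊔ C) →+* T := liftNCRingHom f0 g (by
      intro x h
      obtain ⟨n, c, hh⟩ := sup_exists N C hNC h
      rw [hg h n c hh]
      apply Commute.mul_right
      · show f (blockPi b _) * f (blockPi b _) = f (blockPi b _) * f (blockPi b _)
        rw [← map_mul, ← map_mul, ← map_mul, ← map_mul, Algebra.commutes]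
      · exact hcomm _ _)
    have hF : ∀ h a, F (single h a) = f0 a * g h := fun h a => liftNC_single _ _ _ _
    have hFN : ∀ x : MonoidAlgebra k N,
        F (mapDomainRingHom k (Subgroup.inclusion le_sup_left) x) = f (blockPi b x) := by
      intro x
      induction x using MonoidAlgebra.induction_linear with
      | zero => simp
      | add x y hx hy => simp only [map_add, hx, hy]
      | single n a =>
        rw [mapDomainRingHom_apply, mapDomain_single, hF, hg _ n 1 (by simp), map_one, mul_one]
        show f (blockPi b _) * f (blockPi b _) = _
        rw [← map_mul, ← map_mul]
        congr 2
        simp [single_mul_single]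
    refine ⟨blockLift _ F ?_, ?_, ?_⟩
    · rw [hFN, blockPi_self, map_one]
    · intro r
      obtain ⟨r, rfl⟩ := blockPi_surj b r
      rw [blockLift_pi]
      exact hFN r
    · intro c
      show F (single _ 1) = _
      rw [hF, hg _ 1 c (by simp), map_one, map_one, one_mul, one_mul]
  amal := by
    intro z
    rw [blockLift_pi]
    show blockPi _ (mapDomainRingHom k _ _) = blockPi _ (single _ 1)
    congr 1
    rw [mapDomainRingHom_apply, mapDomain_single]
    congr 1
    apply Subtype.ext
    exact hz z
  gen := by
    rw [eq_top_iff]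
    intro x _
    obtain ⟨x, rfl⟩ := blockPi_surj _ x
    induction x using MonoidAlgebra.induction_linear with
    | zero => rw [map_zero]; exact Subring.zero_mem _
    | add x y hx hy =>
      rw [map_add]
      exact Subring.add_mem _ (hx trivial) (hy trivial)
    | single h a =>
      obtain ⟨n, c, hh⟩ := sup_exists N C hNC h
      have : single h a = mapDomainRingHom k (Subgroup.inclusion (le_sup_left : N ≤ N ⊔ C))
          (single n a) * single (Subgroup.inclusion (le_sup_right : C ≤ N ⊔ C) c) 1 := by
        rw [mapDomainRingHom_apply, mapDomain_single, single_mul_single, mul_one]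
        congr 1
        exact Subtype.ext hh
      rw [this, map_mul]
      refine Subring.mul_mem _ (Subring.subset_closure (Or.inl ⟨blockPi b (single n a), ?_⟩))
        (Subring.subset_closure (Or.inr ⟨c, ?_⟩))
      · rfl
      · rfl

theorem morita_dual {Γ Z : Type} [Group Γ] {zΓ : Z → Γ} {R S A A' : Type} [Ring R] [Ring S]
    [Ring A] [Ring A'] {E : CExt zΓ R A} {E' : CExt zΓ S A'} {P : Type} [AddCommGroup P]
    [Module R P] [Module Sᵐᵒᵖ P] (D : MSetup E E' P)
    (hcen : ∀ z r, E.zR z * r = r * E.zR z)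
    [Module.Finite R P] [Module.Projective R P]
    (hgen : ∃ (n : ℕ) (f : (Fin n → P) →ₗ[R] R), Function.Surjective f)
    (hinj : ∀ s t : Sᵐᵒᵖ, (∀ p : P, s • p = t • p) → s = t)
    (hsur : ∀ u : P →ₗ[R] P, ∃ s : Sᵐᵒᵖ, ∀ p, s • p = u p) :
    IsMoritaEquivalentRing A A' := by
  haveI : SMulCommClass R Sᵐᵒᵖ P := ⟨fun r s p => (D.comm r s p).symm⟩
  let rt : Sᵐᵒᵖ → (P →ₗ[R] P) := fun s =>
    { toFun := fun p => s • p
      map_add' := smul_add s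
      map_smul' := fun r p => D.comm r s p }
  letI : Module S (P →ₗ[R] R) :=
    { smul := fun s q => q ∘ₗ rt (MulOpposite.op s)
      one_smul := fun q => by
        ext p
        show q (MulOpposite.op (1 : S) • p) = q p
        simp
      mul_smul := fun s t q => by
        ext p
        show q (MulOpposite.op (s * t) • p) = q (MulOpposite.op t • MulOpposite.op s • p)
        rw [MulOpposite.op_mul, mul_smul]
      smul_zero := fun s => rfl
      smul_add := fun s q q' => rfl
      add_smul := fun s t q => by
        ext p
        show q (MulOpposite.op (s + t) • p) = q (MulOpposite.op s • p) + q (MulOpposite.op t • p)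
        rw [MulOpposite.op_add, add_smul, map_add]
      zero_smul := fun q => by
        ext p
        show q (MulOpposite.op (0 : S) • p) = 0
        simp }
  have hs : ∀ (s : S) (q : P →ₗ[R] R) p, (s • q) p = q (MulOpposite.op s • p) := fun _ _ _ => rfl
  have hr : ∀ (r : R) (q : P →ₗ[R] R) p, (MulOpposite.op r • q) p = q p * r := fun _ _ _ => rfl
  have D' : MSetup E' E (P →ₗ[R] R) := by
    refine ⟨fun s r q => ?_, fun z q => ?_⟩
    · ext p
      rfl
    · ext p
      rw [hs, hr, ← D.compat, map_smul, smul_eq_mul, hcen]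
  let en : (P →ₗ[R] R) → P → (P →ₗ[R] P) := fun q p => q.smulRight p
  choose σ hσ using hsur
  have hβ : ∀ q p p', σ (en q p) • p' = q p' • p := fun q p p' => hσ (en q p) p'
  refine morita_main (P := P) (Q := P →ₗ[R] R) D D'
    { α := AddMonoidHom.mk' (fun p => AddMonoidHom.mk' (fun q => q p) (fun _ _ => rfl))
        (by intro p p'; ext q; simp)
      β := AddMonoidHom.mk' (fun q => AddMonoidHom.mk' (fun p => (σ (en q p)).unop) (by
          intro p p'
          rw [← MulOpposite.unop_add]
          congr 1
          apply hinj
          intro x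
          rw [add_smul, hβ, hβ, hβ, smul_add])) (by
        intro q q'
        ext p
        show (σ (en (q + q') p)).unop = (σ (en q p)).unop + (σ (en q' p)).unop
        rw [← MulOpposite.unop_add]
        congr 1
        apply hinj
        intro x
        rw [add_smul, hβ, hβ, hβ, LinearMap.add_apply, add_smul])
      α_l := fun r p q => by simp
      α_r := fun r p q => rfl
      α_m := fun s p q => rfl
      β_l := fun s q p => by
        show (σ (en (s • q) p)).unop = s * (σ (en q p)).unop
        apply MulOpposite.op_injective
        apply hinj
        intro x
        rw [MulOpposite.op_mul, mul_smul, MulOpposite.op_unop, MulOpposite.op_unop, hβ, hβ, hs]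
      β_r := fun s q p => by
        show (σ (en q (MulOpposite.op s • p))).unop = (σ (en q p)).unop * s
        apply MulOpposite.op_injective
        apply hinj
        intro x
        rw [MulOpposite.op_mul, mul_smul, MulOpposite.op_unop, MulOpposite.op_unop, hβ, hβ, D.comm]
      β_m := fun r q p => by
        show (σ (en (MulOpposite.op r • q) p)).unop = (σ (en q (r • p))).unop
        congr 1
        apply hinj
        intro x
        rw [hβ, hβ, hr, mul_smul]
      assoc1 := fun p q p' => (hβ q p' p).symm
      assoc2 := fun q p q' => by
        ext x
        show q' (σ (en q p) • x) = q x * q' p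
        rw [hβ, map_smul, smul_eq_mul]
      α_surj := ?_
      β_surj := ?_ }
  · obtain ⟨n, f, hf⟩ := hgen
    obtain ⟨v, hv⟩ := hf 1
    refine ⟨n, v, fun t => f ∘ₗ LinearMap.single R (fun _ => P) t, ?_⟩
    show ∑ t, f (Pi.single t (v t)) = 1
    rw [← map_sum, LinearMap.sum_single_apply, hv]
  · obtain ⟨n, f, hf⟩ := Module.Finite.exists_fin' R P
    obtain ⟨h, hh⟩ := Module.projective_lifting_property f LinearMap.id hf
    refine ⟨n, fun t => LinearMap.proj t ∘ₗ h, fun t => f (Pi.single t 1), ?_⟩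
    show ∑ t, (σ (en (LinearMap.proj t ∘ₗ h) (f (Pi.single t 1)))).unop = 1
    apply MulOpposite.op_injective
    apply hinj
    intro x
    rw [Finset.op_sum, Finset.sum_smul]
    simp only [MulOpposite.op_unop, hβ, MulOpposite.op_one, one_smul, ← map_smul]
    rw [← map_sum]
    have : ∑ t, ((LinearMap.proj t ∘ₗ h) x) • (Pi.single t (1 : R) : Fin n → R) = h x := by
      conv_rhs => rw [← LinearMap.sum_single_apply _ (h x)]
      apply Finset.sum_congr rfl
      intro t _
      ext u
      simp [Pi.single_apply]
    rw [this]
    exact LinearMap.congr_fun hh x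

/-- **Extension to centralizer subalgebras** (Marcus-Minuta, Proposition 4.2,
Morita-equivalence form). If `M` is a `(B, B')`-bimodule inducing a Morita equivalence
between the blocks `B = b.kN` and `B' = b'.kN'` on which `Z(N)` acts identically on both
sides, then the block algebras `C = b.k[N.C_G(N)]` and `C' = b'.k[N'.C_G(N)]` are Morita
equivalent. -/
theorem centralizers_morita (k : Type) [CommRing k] (G : Type) [Group G]
    (N : Subgroup G) [hN : N.Normal] (G' : Subgroup G)
    (hC : Subgroup.centralizer (N : Set G) ≤ G')
    (hGG' : N ⊔ G' = ⊤)
    (b : MonoidAlgebra k ↥N)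
    (hbc : b ∈ Subring.center (MonoidAlgebra k ↥N)) (hbi : IsIdempotentElem b)
    (hbinv : ∀ g : G,
      single g (1 : k) * mapDomainRingHom k N.subtype b * single g⁻¹ (1 : k) =
        mapDomainRingHom k N.subtype b)
    (b' : MonoidAlgebra k ↥(G' ⊓ N))
    (hb'c : b' ∈ Subring.center (MonoidAlgebra k ↥(G' ⊓ N))) (hb'i : IsIdempotentElem b')
    (hb'inv : ∀ g' : ↥G',
      single g' (1 : k) *
          mapDomainRingHom k (Subgroup.inclusion (inf_le_left : G' ⊓ N ≤ G')) b' *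
          single g'⁻¹ (1 : k) =
        mapDomainRingHom k (Subgroup.inclusion (inf_le_left : G' ⊓ N ≤ G')) b')
    (M : Type) [AddCommGroup M] [Module k M]
    [Module (BlockQuot b ⊗[k] (BlockQuot b')ᵐᵒᵖ) M]
    [IsScalarTower k (BlockQuot b ⊗[k] (BlockQuot b')ᵐᵒᵖ) M]
    (hM : InducesMorita k (BlockQuot b) (BlockQuot b') M)
    (hZ : ∀ z : ↥N, z ∈ Subgroup.center ↥N → ∀ hz' : (z : G) ∈ G' ⊓ N, ∀ m : M,
      (blockPi b (single z (1 : k)) ⊗ₜ[k] (1 : (BlockQuot b')ᵐᵒᵖ)) • m =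
        ((1 : BlockQuot b) ⊗ₜ[k]
          MulOpposite.op (blockPi b' (single (⟨(z : G), hz'⟩ : ↥(G' ⊓ N)) (1 : k)))) • m) :
    IsMoritaEquivalentRing
      (BlockQuot (mapDomainRingHom k
        (Subgroup.inclusion (le_sup_left : N ≤ N ⊔ Subgroup.centralizer (N : Set G))) b))
      (BlockQuot (mapDomainRingHom k
        (Subgroup.inclusion
          (le_sup_left : G' ⊓ N ≤ (G' ⊓ N) ⊔ Subgroup.centralizer (N : Set G))) b')) := by
  obtain ⟨hfin, hproj, hgen, φ, ⟨hφi, hφs⟩, hφ⟩ := hM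
  have hNC : ∀ n ∈ N, ∀ c ∈ Subgroup.centralizer (N : Set G), n * c = c * n :=
    fun n hn c hc => Subgroup.mem_centralizer_iff.1 hc n hn
  let Z := {z : G // z ∈ N ∧ z ∈ Subgroup.centralizer (N : Set G)}
  let zN : Z → N := fun z => ⟨z.1, z.2.1⟩
  let zN' : Z → ↥(G' ⊓ N) := fun z => ⟨z.1, hC z.2.2, z.2.1⟩
  let zΓ : Z → Subgroup.centralizer (N : Set G) := fun z => ⟨z.1, z.2.2⟩
  have hcenN : ∀ z : Z, zN z ∈ Subgroup.center N := by
    intro z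
    rw [Subgroup.mem_center_iff]
    intro g
    exact Subtype.ext (hNC g.1 g.2 z.1 z.2.2)
  let E := groupExt (k := k) N (Subgroup.centralizer (N : Set G)) hNC b zN zΓ (fun _ => rfl)
    (fun n c h => ⟨⟨n.1, n.2, by rw [h]; exact c.2⟩, rfl⟩)
  let E' := groupExt (k := k) (G' ⊓ N) (Subgroup.centralizer (N : Set G))
    (fun n hn => hNC n hn.2) b' zN' zΓ (fun _ => rfl)
    (fun n c h => ⟨⟨n.1, n.2.2, by rw [h]; exact c.2⟩, rfl⟩)
  letI i1 : Module (BlockQuot b) M :=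
    Module.compHom M (Algebra.TensorProduct.includeLeftRingHom :
      BlockQuot b →+* BlockQuot b ⊗[k] (BlockQuot b')ᵐᵒᵖ)
  letI i2 : Module (BlockQuot b')ᵐᵒᵖ M :=
    Module.compHom M ((Algebra.TensorProduct.includeRight :
      (BlockQuot b')ᵐᵒᵖ →ₐ[k] BlockQuot b ⊗[k] (BlockQuot b')ᵐᵒᵖ) :
      (BlockQuot b')ᵐᵒᵖ →+* BlockQuot b ⊗[k] (BlockQuot b')ᵐᵒᵖ)
  have h1 : ∀ (r : BlockQuot b) (m : M),
      r • m = (r ⊗ₜ[k] (1 : (BlockQuot b')ᵐᵒᵖ)) • m := fun _ _ => rfl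
  have h2 : ∀ (s : (BlockQuot b')ᵐᵒᵖ) (m : M),
      s • m = ((1 : BlockQuot b) ⊗ₜ[k] s) • m := fun _ _ => rfl
  have D : MSetup E E' M := by
    refine ⟨fun r s p => ?_, fun z p => ?_⟩
    · rw [h1, h1, h2, h2, ← mul_smul, ← mul_smul, Algebra.TensorProduct.tmul_mul_tmul,
        Algebra.TensorProduct.tmul_mul_tmul]
      simp
    · exact hZ (zN z) (hcenN z) ⟨hC z.2.2, z.2.1⟩ p
  refine morita_dual D ?_ hgen ?_ ?_
  · intro z r
    obtain ⟨r, rfl⟩ := blockPi_surj b r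
    show blockPi b (single (zN z) 1) * _ = _ * blockPi b (single (zN z) 1)
    rw [← map_mul, ← map_mul]
    congr 1
    induction r using MonoidAlgebra.induction_linear with
    | zero => simp
    | add x y hx hy => rw [mul_add, add_mul, hx, hy]
    | single n a =>
      rw [single_mul_single, single_mul_single, Subgroup.mem_center_iff.1 (hcenN z) n, one_mul,
        mul_one]
  · intro s t hst
    apply hφi
    ext p
    rw [hφ, hφ]
    exact hst p
  · intro u
    obtain ⟨s, rfl⟩ := hφs u
    exact ⟨s, fun p => (hφ s p).symm⟩
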